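/- arXiv:1906.00135 — 3 statements merged into one kernel-verified Lean document; each statement's English description precedes it below -/
import Mathlib

section
/- Let G be a finite simple graph with γ_{1/2}(G) = 1. Then for every integer m ≥ 2, γ_{1/2}(G □ P_m) ≥ γ_{1/2}(P_m). -/
/-!
Let `V` and `W` be the vertex sets of `G` and `H`. The projection `π` of `G □ H` onto `H` sends
equal or adjacent vertices to equal or adjacent vertices, so `N[S] ⊆ V × N[π S]`. If `S` is a
`p`-dominating set, then `p |V| |W| ≤ |N[S]| ≤ |V| |N[π S]|`, and dividing by `|V|` shows that
`π S`, which has at most `|S|` elements, is a `p`-dominating set of `H`.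
-/

open SimpleGraph

/-- The closed neighborhood `N[S]` of a set of vertices `S`:
all vertices equal or adjacent to some vertex of `S`. -/
def closedNbhd {V : Type*} (G : SimpleGraph V) (S : Set V) : Set V :=
  {w | ∃ u ∈ S, w = u ∨ G.Adj u w}

/-- `S` is a `p`-dominating set of `G` if `N[S]` contains at least a proportion `p`
of the vertices. -/
def IsPDomSet {V : Type*} [Fintype V] (G : SimpleGraph V) (p : ℝ) (S : Set V) : Prop :=
  p * (Fintype.card V : ℝ) ≤ ((closedNbhd G S).ncard : ℝ)

/-- The `p`-domination number `γ_p(G)`: the minimum cardinality of a `p`-dominating set. -/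
noncomputable def pDomNum {V : Type*} [Fintype V] (G : SimpleGraph V) (p : ℝ) : ℕ :=
  sInf {k : ℕ | ∃ S : Set V, IsPDomSet G p S ∧ S.ncard = k}

/-- `S` is a `γ_p`-set: a `p`-dominating set of minimum cardinality `γ_p(G)`. -/
def IsGammaPSet {V : Type*} [Fintype V] (G : SimpleGraph V) (p : ℝ) (S : Set V) : Prop :=
  IsPDomSet G p S ∧ S.ncard = pDomNum G p

/-- `v` belongs to the `p`-influencing set of `G`, i.e. the union of all `γ_p`-sets. -/
def InInfluence {V : Type*} [Fintype V] (G : SimpleGraph V) (p : ℝ) (v : V) : Prop :=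
  ∃ S : Set V, IsGammaPSet G p S ∧ v ∈ S

section PDomination

variable {V : Type*} {G : SimpleGraph V} {p : ℝ}

@[simp]
theorem closedNbhd_univ (G : SimpleGraph V) : closedNbhd G Set.univ = Set.univ :=
  Set.eq_univ_of_forall fun v => ⟨v, Set.mem_univ v, Or.inl rfl⟩

variable [Fintype V]

theorem isPDomSet_univ (G : SimpleGraph V) (hp : p ≤ 1) : IsPDomSet G p Set.univ := by
  rw [IsPDomSet, closedNbhd_univ, Set.ncard_univ, Nat.card_eq_fintype_card]
  exact mul_le_of_le_one_left (Nat.cast_nonneg _) hp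

theorem IsPDomSet.of_isEmpty [IsEmpty V] (S : Set V) : IsPDomSet G p S := by
  rw [IsPDomSet, Fintype.card_eq_zero, Nat.cast_zero, mul_zero]
  exact Nat.cast_nonneg _

theorem IsPDomSet.pDomNum_le {S : Set V} (hS : IsPDomSet G p S) : pDomNum G p ≤ S.ncard :=
  Nat.sInf_le ⟨S, hS, rfl⟩

theorem exists_isGammaPSet (G : SimpleGraph V) (hp : p ≤ 1) : ∃ S : Set V, IsGammaPSet G p S :=
  Nat.sInf_mem (s := {k | ∃ S : Set V, IsPDomSet G p S ∧ S.ncard = k})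
    ⟨_, Set.univ, isPDomSet_univ G hp, rfl⟩

theorem pDomNum_of_isEmpty [IsEmpty V] (G : SimpleGraph V) (p : ℝ) : pDomNum G p = 0 :=
  Nat.le_zero.1 <| (IsPDomSet.of_isEmpty ∅).pDomNum_le.trans_eq (Set.ncard_empty V)

theorem nonempty_of_pDomNum_ne_zero (h : pDomNum G p ≠ 0) : Nonempty V := by
  contrapose! h
  exact pDomNum_of_isEmpty G p

end PDomination

section BoxProd

variable {V W : Type*}

theorem closedNbhd_boxProd_subset (G : SimpleGraph V) (H : SimpleGraph W) (S : Set (V × W)) :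
    closedNbhd (G □ H) S ⊆ Set.univ ×ˢ closedNbhd H (Prod.snd '' S) := by
  rintro ⟨v, w⟩ ⟨u, hu, huv⟩
  refine ⟨Set.mem_univ v, u.2, Set.mem_image_of_mem Prod.snd hu, ?_⟩
  rcases huv with rfl | hadj
  · exact Or.inl rfl
  · rcases boxProd_adj.1 hadj with ⟨-, heq⟩ | ⟨hadj_snd, -⟩
    · exact Or.inl heq.symm
    · exact Or.inr hadj_snd

theorem ncard_closedNbhd_boxProd_le [Finite V] [Finite W] (G : SimpleGraph V)
    (H : SimpleGraph W) (S : Set (V × W)) :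
    (closedNbhd (G □ H) S).ncard ≤ Nat.card V * (closedNbhd H (Prod.snd '' S)).ncard := by
  rw [← Set.ncard_univ, ← Set.ncard_prod]
  exact Set.ncard_le_ncard (closedNbhd_boxProd_subset G H S)

variable [Fintype V] [Fintype W] [Nonempty V] {p : ℝ}

theorem IsPDomSet.snd_image {G : SimpleGraph V} {H : SimpleGraph W} {S : Set (V × W)}
    (hS : IsPDomSet (G □ H) p S) : IsPDomSet H p (Prod.snd '' S) := by
  have hV : (0 : ℝ) < Fintype.card V := Nat.cast_pos.2 Fintype.card_pos
  refine le_of_mul_le_mul_left ?_ hV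
  calc (Fintype.card V : ℝ) * (p * Fintype.card W)
      = p * Fintype.card (V × W) := by rw [Fintype.card_prod, Nat.cast_mul, mul_left_comm]
    _ ≤ (closedNbhd (G □ H) S).ncard := hS
    _ ≤ Fintype.card V * (closedNbhd H (Prod.snd '' S)).ncard := by
      rw [← Nat.card_eq_fintype_card]
      exact_mod_cast ncard_closedNbhd_boxProd_le G H S

theorem stmt4_general (G : SimpleGraph V) (H : SimpleGraph W) (hp : p ≤ 1) :
    pDomNum H p ≤ pDomNum (G □ H) p := by
  obtain ⟨S, hS, hcard⟩ := exists_isGammaPSet (G □ H) hp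
  calc pDomNum H p
      ≤ (Prod.snd '' S).ncard := hS.snd_image.pDomNum_le
    _ ≤ S.ncard := Set.ncard_image_le
    _ = pDomNum (G □ H) p := hcard

end BoxProd

theorem stmt4 {V : Type*} [Fintype V] (G : SimpleGraph V)
    (hG : pDomNum G (1/2) = 1) (m : ℕ) (hm : 2 ≤ m) :
    pDomNum (pathGraph m) (1/2) ≤ pDomNum (G □ pathGraph m) (1/2) := by
  have : Nonempty V := nonempty_of_pDomNum_ne_zero (hG.trans_ne one_ne_zero)
  exact stmt4_general G (pathGraph m) (by norm_num)
end

section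
/- Let K_{m,n} be the complete bipartite graph with parts V_1 and V_2 of sizes m and n respectively, where m > n ≥ 1. Then the intersection over all real p with 0 < p ≤ 1 of the p-influencing sets of K_{m,n} equals V_2; that is, a vertex belongs to some γ_p-set for every p ∈ (0,1] if and only if it lies in V_2. -/
/-!
If some singleton is `p`-dominating, then the `γ_p`-sets are exactly the `p`-dominating singletons.
For `p = (deg u + 1) / N` these are the `{v}` with `deg u ≤ deg v`, so a vertex that is influencing
for every `p` has maximum degree. Conversely, let `v` have maximum degree and lie in a dominating
pair. For each `p`, either `{v}` is `p`-dominating, or no singleton is and the pair is a `γ_p`-set.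
In a complete bipartite graph every vertex lies in a dominating pair, and the vertices of maximum
degree are those of the smaller part.
-/

open SimpleGraph

section ClosedNbhd

variable {V : Type*} (G : SimpleGraph V)

lemma closedNbhd_empty : closedNbhd G ∅ = ∅ := by
  simp [closedNbhd]

lemma closedNbhd_singleton (v : V) : closedNbhd G {v} = insert v (G.neighborSet v) := by
  ext w
  simp [closedNbhd]

lemma ncard_closedNbhd_singleton (v : V) [Fintype (G.neighborSet v)] :
    (closedNbhd G {v}).ncard = G.degree v + 1 := by
  rw [closedNbhd_singleton, Set.ncard_insert_of_notMem (by simp),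
    ← G.card_neighborSet_eq_degree, Set.ncard_eq_toFinset_card', Set.toFinset_card]

end ClosedNbhd

section PDomination

variable {V : Type*} [Fintype V] {G : SimpleGraph V} {p : ℝ} {S : Set V} {u v w : V}

lemma isPDomSet_singleton_iff [Fintype (G.neighborSet v)] :
    IsPDomSet G p {v} ↔ p * Fintype.card V ≤ G.degree v + 1 := by
  rw [IsPDomSet, ncard_closedNbhd_singleton, Nat.cast_succ]

lemma isPDomSet_of_closedNbhd_eq_univ (hp : p ≤ 1) (hS : closedNbhd G S = Set.univ) :
    IsPDomSet G p S := by
  rw [IsPDomSet, hS, Set.ncard_univ, Nat.card_eq_fintype_card]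
  exact mul_le_of_le_one_left (Nat.cast_nonneg _) hp

lemma IsPDomSet.nonempty [Nonempty V] (hp : 0 < p) (hS : IsPDomSet G p S) : S.Nonempty := by
  rw [Set.nonempty_iff_ne_empty]
  rintro rfl
  rw [IsPDomSet, closedNbhd_empty, Set.ncard_empty, Nat.cast_zero] at hS
  exact hS.not_gt (mul_pos hp (Nat.cast_pos.2 Fintype.card_pos))

lemma isGammaPSet_iff_forall_ncard_le :
    IsGammaPSet G p S ↔ IsPDomSet G p S ∧ ∀ T, IsPDomSet G p T → S.ncard ≤ T.ncard := by
  refine and_congr_right fun hS => ⟨fun h T hT => h.trans_le (Nat.sInf_le ⟨T, hT, rfl⟩),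
    fun h => le_antisymm (le_csInf ⟨_, S, hS, rfl⟩ ?_) (Nat.sInf_le ⟨S, hS, rfl⟩)⟩
  rintro _ ⟨T, hT, rfl⟩
  exact h T hT

lemma inInfluence_iff_isPDomSet_singleton (hp : 0 < p) (hu : IsPDomSet G p {u}) :
    InInfluence G p v ↔ IsPDomSet G p {v} := by
  constructor
  · rintro ⟨S, hS, hv⟩
    obtain ⟨hdom, hmin⟩ := isGammaPSet_iff_forall_ncard_le.1 hS
    have hcard : S.ncard ≤ 1 := (hmin _ hu).trans_eq (Set.ncard_singleton u)
    have hsub : S.Subsingleton := Set.ncard_le_one_iff_subsingleton.1 hcard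
    rwa [hsub.eq_singleton_of_mem hv] at hdom
  · intro hv
    have : Nonempty V := ⟨v⟩
    refine ⟨{v}, isGammaPSet_iff_forall_ncard_le.2 ⟨hv, fun T hT => ?_⟩, rfl⟩
    rw [Set.ncard_singleton]
    exact (hT.nonempty hp).ncard_pos

lemma inInfluence_of_isPDomSet_pair (hp : 0 < p) (hvw : IsPDomSet G p {v, w})
    (hmax : ∀ u, IsPDomSet G p {u} → IsPDomSet G p {v}) : InInfluence G p v := by
  by_cases hv : IsPDomSet G p {v}
  · exact (inInfluence_iff_isPDomSet_singleton hp hv).2 hv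
  have : Nonempty V := ⟨v⟩
  refine ⟨{v, w}, isGammaPSet_iff_forall_ncard_le.2 ⟨hvw, fun T hT => ?_⟩, by simp⟩
  have hT_pos : 0 < T.ncard := (hT.nonempty hp).ncard_pos
  have hT_ne_one : T.ncard ≠ 1 := by
    rw [Ne, Set.ncard_eq_one]
    rintro ⟨u, rfl⟩
    exact hv (hmax u hT)
  calc
    ({v, w} : Set V).ncard ≤ ({w} : Set V).ncard + 1 := Set.ncard_insert_le v {w}
    _ = 2 := by rw [Set.ncard_singleton]
    _ ≤ T.ncard := by lia

lemma degree_le_of_forall_inInfluence [DecidableRel G.Adj]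
    (hv : ∀ p : ℝ, 0 < p → p ≤ 1 → InInfluence G p v) (u : V) : G.degree u ≤ G.degree v := by
  have hN : (0 : ℝ) < Fintype.card V := Nat.cast_pos.2 (Fintype.card_pos_iff.2 ⟨v⟩)
  have hdeg : (G.degree u + 1 : ℝ) ≤ Fintype.card V := by
    exact_mod_cast G.degree_lt_card_verts u
  -- the largest `p` for which `{u}` is `p`-dominating
  let p : ℝ := (G.degree u + 1) / Fintype.card V
  have hp : 0 < p := by positivity
  have hpN : p * Fintype.card V = G.degree u + 1 := div_mul_cancel₀ _ hN.ne'
  have hu : IsPDomSet G p {u} := isPDomSet_singleton_iff.2 hpN.le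
  have hv' : IsPDomSet G p {v} :=
    (inInfluence_iff_isPDomSet_singleton hp hu).1 (hv p hp ((div_le_one hN).2 hdeg))
  rw [isPDomSet_singleton_iff, hpN, add_le_add_iff_right] at hv'
  exact_mod_cast hv'

theorem forall_inInfluence_iff_forall_degree_le [DecidableRel G.Adj]
    (hvw : closedNbhd G {v, w} = Set.univ) :
    (∀ p : ℝ, 0 < p → p ≤ 1 → InInfluence G p v) ↔ ∀ u, G.degree u ≤ G.degree v := by
  refine ⟨degree_le_of_forall_inInfluence, fun hmax p hp hp1 =>
    inInfluence_of_isPDomSet_pair hp (isPDomSet_of_closedNbhd_eq_univ hp1 hvw) fun u hu => ?_⟩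
  rw [isPDomSet_singleton_iff] at hu ⊢
  exact hu.trans (by gcongr; exact hmax u)

end PDomination

section CompleteBipartite

variable {α β : Type*}

lemma degree_completeBipartiteGraph_inl [Fintype β] (a : α)
    [Fintype ((completeBipartiteGraph α β).neighborSet (Sum.inl a))] :
    (completeBipartiteGraph α β).degree (Sum.inl a) = Fintype.card β := by
  have h : (completeBipartiteGraph α β).neighborSet (Sum.inl a) = Set.range Sum.inr := by
    ext (_ | _) <;> simp
  rw [← card_neighborSet_eq_degree, ← Nat.card_eq_fintype_card, h,
    Nat.card_range_of_injective Sum.inr_injective, Nat.card_eq_fintype_card]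

lemma degree_completeBipartiteGraph_inr [Fintype α] (b : β)
    [Fintype ((completeBipartiteGraph α β).neighborSet (Sum.inr b))] :
    (completeBipartiteGraph α β).degree (Sum.inr b) = Fintype.card α := by
  have h : (completeBipartiteGraph α β).neighborSet (Sum.inr b) = Set.range Sum.inl := by
    ext (_ | _) <;> simp
  rw [← card_neighborSet_eq_degree, ← Nat.card_eq_fintype_card, h,
    Nat.card_range_of_injective Sum.inl_injective, Nat.card_eq_fintype_card]

lemma closedNbhd_completeBipartiteGraph_pair (a : α) (b : β) :
    closedNbhd (completeBipartiteGraph α β) {Sum.inl a, Sum.inr b} = Set.univ := by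
  ext (_ | _) <;> simp [closedNbhd]

theorem stmt15_general [Fintype α] [Fintype β] [Nonempty β]
    (hcard : Fintype.card β < Fintype.card α) (v : α ⊕ β) :
    (∀ p : ℝ, 0 < p → p ≤ 1 → InInfluence (completeBipartiteGraph α β) p v) ↔ v.isRight := by
  classical
  obtain ⟨a₀⟩ : Nonempty α := Fintype.card_pos_iff.1 (Nat.zero_lt_of_lt hcard)
  obtain ⟨b₀⟩ : Nonempty β := inferInstance
  rcases v with a | b
  · have hpair := closedNbhd_completeBipartiteGraph_pair a b₀
    rw [forall_inInfluence_iff_forall_degree_le hpair]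
    simp [degree_completeBipartiteGraph_inl, degree_completeBipartiteGraph_inr, hcard]
  · have hpair := closedNbhd_completeBipartiteGraph_pair a₀ b
    rw [Set.pair_comm] at hpair
    rw [forall_inInfluence_iff_forall_degree_le hpair]
    simp [degree_completeBipartiteGraph_inl, degree_completeBipartiteGraph_inr, hcard.le]

end CompleteBipartite

theorem stmt15 (m n : ℕ) (hn : 1 ≤ n) (hmn : n < m) :
    ∀ v : Fin m ⊕ Fin n,
      (∀ p : ℝ, 0 < p → p ≤ 1 →
        InInfluence (completeBipartiteGraph (Fin m) (Fin n)) p v) ↔ v.isRight := by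
  have : Nonempty (Fin n) := ⟨⟨0, hn⟩⟩
  exact stmt15_general (by simpa using hmn)
end

section
/- Let P_n be the path with vertices v_1, …, v_n (v_i adjacent to v_{i+1}), where n ≥ 2 and n ≡ 2 (mod 3). Then: (i) for every integer k ≥ 0 with (3k+1)/n ≤ 1, the p-influencing set of P_n for p = (3k+1)/n, and for p = (3k+2)/n when (3k+2)/n < 1, is the whole vertex set {v_1, …, v_n}; (ii) for every integer k ≥ 1 with 3k ≤ n − 2, the p-influencing set of P_n for p = 3k/n is {v_2, v_3, …, v_{n−1}}; and (iii) for p = 1, the p-influencing set of P_n is {v_1, …, v_n} \ {v_3, v_6, v_9, …, v_{n−2}} (the vertices v_i with i ≢ 0 (mod 3)). -/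
/-!
If every closed neighborhood of `G` has at most `d` vertices, then covering `t` vertices takes at
least `⌈t / d⌉` of them. The defect `d * |S| - |N[S]|` is moreover monotone in `S`, so one large set
`T ∋ v` of small defect contains `γ_p`-sets through `v` for many values of `p` at once.

In the path, where `d = 3`, progressions of difference `3` serve as `T`. For `n = 3m + 2` and
vertices numbered from `0`, the residue classes of `0` and of `1` dominate with `m + 1` elements,
hence have defect `1`; a vertex that is not a leaf lies in a progression of `m` elements with defect
`0`, and one further vertex makes this a set of `m + 1` elements with defect at most `2`.

Conversely, a set of defect `0` contains no leaf. A dominating set `S` has at least as many elements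
in `N[P]` as there are in any `P` with pairwise disjoint closed neighborhoods. If `S` contains
`v ≡ 2 (mod 3)`, take for `P` the vertices `≡ 0` before `v` and `≡ 1` after it: these are `m + 1`
vertices and `v ∉ N[P]`, so `S` is not minimum.
-/

open SimpleGraph

section ClosedNbhd

variable {V : Type*} {G : SimpleGraph V}

lemma subset_closedNbhd (S : Set V) : S ⊆ closedNbhd G S :=
  fun w hw => ⟨w, hw, Or.inl rfl⟩

lemma closedNbhd_union (S T : Set V) : closedNbhd G (S ∪ T) = closedNbhd G S ∪ closedNbhd G T := by
  ext w
  simp only [closedNbhd, Set.mem_union, Set.mem_ofPred_eq, or_and_right, exists_or]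

lemma mem_closedNbhd_singleton {u w : V} : w ∈ closedNbhd G {u} ↔ w = u ∨ G.Adj u w := by
  simp [closedNbhd]

lemma mem_closedNbhd_singleton_comm {u w : V} :
    w ∈ closedNbhd G {u} ↔ u ∈ closedNbhd G {w} := by
  rw [mem_closedNbhd_singleton, mem_closedNbhd_singleton, eq_comm, G.adj_comm]

lemma mem_closedNbhd_iff_exists {S : Set V} {w : V} :
    w ∈ closedNbhd G S ↔ ∃ u ∈ S, w ∈ closedNbhd G {u} := by
  simp only [mem_closedNbhd_singleton]
  rfl

variable [Finite V] {d : ℕ}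

lemma ncard_closedNbhd_le (hd : ∀ v, (closedNbhd G {v}).ncard ≤ d) (S : Set V) :
    (closedNbhd G S).ncard ≤ d * S.ncard := by
  induction S, S.toFinite using Set.Finite.induction_on with
  | empty => simp [closedNbhd]
  | @insert a S ha _ ih =>
    rw [Set.insert_eq, closedNbhd_union, ← Set.insert_eq, Set.ncard_insert_of_notMem ha]
    linarith [Set.ncard_union_le (closedNbhd G {a}) (closedNbhd G S), hd a]

lemma ncard_closedNbhd_add_le (hd : ∀ v, (closedNbhd G {v}).ncard ≤ d) {S T : Set V}
    (hST : S ⊆ T) :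
    (closedNbhd G T).ncard + d * S.ncard ≤ (closedNbhd G S).ncard + d * T.ncard := by
  have hcover : (closedNbhd G T).ncard ≤ (closedNbhd G S).ncard + d * (T \ S).ncard := by
    rw [← Set.union_sdiff_cancel hST, closedNbhd_union, Set.union_sdiff_cancel hST]
    exact (Set.ncard_union_le _ _).trans (Nat.add_le_add_left (ncard_closedNbhd_le hd _) _)
  rw [← Set.ncard_sdiff_add_ncard_of_subset hST]
  linarith

lemma le_ncard_closedNbhd_singleton (hd : ∀ v, (closedNbhd G {v}).ncard ≤ d) {S : Set V}
    (hS : d * S.ncard ≤ (closedNbhd G S).ncard) {v : V} (hv : v ∈ S) :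
    d ≤ (closedNbhd G {v}).ncard := by
  have hdefect := ncard_closedNbhd_add_le hd (Set.singleton_subset_iff.2 hv)
  rw [Set.ncard_singleton] at hdefect
  linarith

lemma exists_ncard_closedNbhd_lt_insert {S : Set V} (hS : closedNbhd G S ≠ Set.univ) :
    ∃ w ∉ S, (closedNbhd G S).ncard < (closedNbhd G (insert w S)).ncard := by
  obtain ⟨w, hw⟩ := (Set.ne_univ_iff_exists_notMem _).1 hS
  refine ⟨w, fun hwS => hw (subset_closedNbhd S hwS), Set.ncard_lt_ncard ?_⟩
  rw [Set.insert_eq, closedNbhd_union, Set.union_comm, Set.ssubset_iff_of_subset (by simp)]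
  exact ⟨w, Or.inr (subset_closedNbhd {w} rfl), hw⟩

lemma ncard_le_ncard_inter_of_packing {P S : Set V}
    (hP : P.PairwiseDisjoint fun w => closedNbhd G {w}) (hPS : P ⊆ closedNbhd G S) :
    P.ncard ≤ (S ∩ closedNbhd G P).ncard := by
  have hdom : ∀ w ∈ P, ∃ u ∈ S, u ∈ closedNbhd G {w} := fun w hw => by
    simpa only [mem_closedNbhd_singleton_comm] using mem_closedNbhd_iff_exists.1 (hPS hw)
  choose! f hfS hfN using hdom
  refine Set.ncard_le_ncard_of_injOn f
    (fun w hw => ⟨hfS w hw, mem_closedNbhd_iff_exists.2 ⟨w, hw, hfN w hw⟩⟩) fun w hw x hx hfwx => ?_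
  exact hP.elim_set hw hx (f w) (hfN w hw) (hfwx ▸ hfN x hx)

end ClosedNbhd

section GammaPSet

variable {V : Type*} [Fintype V] {G : SimpleGraph V} {p : ℝ} {t : ℕ}

lemma isPDomSet_iff_le_ncard (hp : p * Fintype.card V = t) {S : Set V} :
    IsPDomSet G p S ↔ t ≤ (closedNbhd G S).ncard := by
  rw [IsPDomSet, hp, Nat.cast_le]

lemma IsPDomSet.isGammaPSet {S : Set V} (hS : IsPDomSet G p S)
    (hmin : ∀ T, IsPDomSet G p T → S.ncard ≤ T.ncard) : IsGammaPSet G p S := by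
  refine ⟨hS, le_antisymm (le_csInf ⟨_, S, hS, rfl⟩ ?_) (Nat.sInf_le ⟨S, hS, rfl⟩)⟩
  rintro _ ⟨T, hT, rfl⟩
  exact hmin T hT

lemma exists_isGammaPSet_of_defect_le {d k : ℕ} (hd : ∀ v, (closedNbhd G {v}).ncard ≤ d)
    (hp : p * Fintype.card V = t) {T : Set V} {v : V} (hv : v ∈ T) (hk : 0 < k)
    (hkT : k ≤ T.ncard) (hT : d * T.ncard + t ≤ (closedNbhd G T).ncard + d * k)
    (hkt : d * k < t + d) :
    ∃ S, IsGammaPSet G p S ∧ v ∈ S ∧ S.ncard = k := by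
  obtain ⟨S, hvS, hST, rfl⟩ :=
    Set.exists_subsuperset_card_eq (Set.singleton_subset_iff.2 hv)
      (by rwa [Set.ncard_singleton]) hkT
  have hS : IsPDomSet G p S := by
    rw [isPDomSet_iff_le_ncard hp]
    linarith [ncard_closedNbhd_add_le hd hST]
  refine ⟨S, hS.isGammaPSet fun R hR => ?_, Set.singleton_subset_iff.1 hvS, rfl⟩
  have hlt : d * S.ncard < d * (R.ncard + 1) := by
    rw [isPDomSet_iff_le_ncard hp] at hR
    linarith [ncard_closedNbhd_le hd R]
  exact Nat.lt_succ_iff.1 (lt_of_mul_lt_mul_left hlt (Nat.zero_le d))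

end GammaPSet

lemma ncard_preimage_val_Ico (n a b : ℕ) :
    ((Fin.val : Fin n → ℕ) ⁻¹' Set.Ico a b).ncard = min b n - a := by
  rw [← Set.ncard_image_of_injective _ Fin.val_injective, Set.image_preimage_eq_inter_range,
    Fin.range_val, Set.Ico_inter_Iio, Set.ncard_eq_toFinset_card', Set.toFinset_Ico, Nat.card_Ico]

/-- The vertices `a, a + 3, …, a + 3 * (l - 1)` of the path on `Fin n`, with terms outside the path
left out; they dominate an interval, each vertex of which has only one of them in its closed
neighborhood. -/
def pathProg (n a l : ℕ) : Set (Fin n) :=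
  {u | ∃ i < l, u.val = a + 3 * i}

section Path

variable {n : ℕ}

lemma mem_closedNbhd_pathGraph {S : Set (Fin n)} {w : Fin n} :
    w ∈ closedNbhd (pathGraph n) S ↔ ∃ u ∈ S, u.val ≤ w.val + 1 ∧ w.val ≤ u.val + 1 := by
  refine exists_congr fun u => and_congr_right fun _ => ?_
  rw [pathGraph_adj, Fin.ext_iff]
  omega

lemma ncard_pathProg {a l : ℕ} (h : a + 3 * l ≤ n + 2) : (pathProg n a l).ncard = l := by
  have himage : pathProg n a l = Fin.val ⁻¹' ((fun i => a + 3 * i) '' Set.Iio l) := by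
    ext u
    simp [pathProg, eq_comm]
  rw [himage, Set.ncard_preimage_of_injective_subset_range Fin.val_injective,
    Set.ncard_image_of_injective _ fun i j hij => by simpa using hij]
  · simp
  · rintro _ ⟨i, hi, rfl⟩
    exact ⟨⟨a + 3 * i, by grind⟩, rfl⟩

lemma closedNbhd_pathProg {a l : ℕ} (h : a + 3 * l ≤ n + 2) :
    closedNbhd (pathGraph n) (pathProg n a l) = Fin.val ⁻¹' Set.Ico (a - 1) (a + 3 * l - 1) := by
  ext w
  rw [mem_closedNbhd_pathGraph, Set.mem_preimage, Set.mem_Ico]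
  constructor
  · rintro ⟨u, ⟨i, hi, hu⟩, hw⟩
    omega
  · intro hw
    exact ⟨⟨a + 3 * ((w.val + 1 - a) / 3), by omega⟩, ⟨_, by omega, rfl⟩, by grind⟩

lemma ncard_closedNbhd_pathProg {a l : ℕ} (h : a + 3 * l ≤ n + 2) :
    (closedNbhd (pathGraph n) (pathProg n a l)).ncard = min (a + 3 * l - 1) n - (a - 1) := by
  rw [closedNbhd_pathProg h, ncard_preimage_val_Ico]

lemma ncard_closedNbhd_singleton_pathGraph (u : Fin n) :
    (closedNbhd (pathGraph n) {u}).ncard = min (u.val + 2) n - (u.val - 1) := by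
  have hu : {u} = pathProg n u.val 1 := by
    ext w
    simp [pathProg, Fin.ext_iff]
  rw [hu, ncard_closedNbhd_pathProg (by omega)]
  rfl

lemma ncard_closedNbhd_singleton_pathGraph_le (u : Fin n) :
    (closedNbhd (pathGraph n) {u}).ncard ≤ 3 := by
  rw [ncard_closedNbhd_singleton_pathGraph]
  omega

lemma pairwiseDisjoint_closedNbhd_pathGraph {P : Set (Fin n)}
    (hP : ∀ u ∈ P, ∀ w ∈ P, u < w → u.val + 3 ≤ w.val) :
    P.PairwiseDisjoint fun w => closedNbhd (pathGraph n) {w} := by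
  intro u hu w hw huw
  refine Set.disjoint_left.2 fun x hxu hxw => ?_
  simp only [mem_closedNbhd_pathGraph, Set.mem_singleton_iff, exists_eq_left] at hxu hxw
  rcases lt_or_gt_of_ne huw with h | h
  · have := hP u hu w hw h
    omega
  · have := hP w hw u hu h
    omega

lemma lt_ncard_of_dominating_of_mem (hn : n % 3 = 2) {S : Set (Fin n)}
    (hS : closedNbhd (pathGraph n) S = Set.univ) {v : Fin n} (hvS : v ∈ S) (hv : v.val % 3 = 2) :
    n / 3 + 1 < S.ncard := by
  let A := pathProg n 0 (v.val / 3 + 1)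
  let B := pathProg n (v.val + 2) (n / 3 - v.val / 3)
  have hAB : Disjoint A B := by
    refine Set.disjoint_left.2 ?_
    rintro u ⟨i, -, hui⟩ ⟨j, -, huj⟩
    omega
  have hcard : (A ∪ B).ncard = n / 3 + 1 := by
    rw [Set.ncard_union_eq hAB, ncard_pathProg (by omega), ncard_pathProg (by omega)]
    omega
  have hpacking : (A ∪ B).PairwiseDisjoint fun w => closedNbhd (pathGraph n) {w} := by
    apply pairwiseDisjoint_closedNbhd_pathGraph
    rintro u (⟨i, hi, hu⟩ | ⟨i, -, hu⟩) w (⟨j, hj, hw⟩ | ⟨j, -, hw⟩) huw <;> omega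
  have hvN : v ∉ closedNbhd (pathGraph n) (A ∪ B) := by
    rw [closedNbhd_union, closedNbhd_pathProg (by omega), closedNbhd_pathProg (by omega)]
    simp only [Set.mem_union, Set.mem_preimage, Set.mem_Ico]
    omega
  calc n / 3 + 1 = (A ∪ B).ncard := hcard.symm
    _ ≤ (S ∩ closedNbhd (pathGraph n) (A ∪ B)).ncard :=
      ncard_le_ncard_inter_of_packing hpacking (hS ▸ Set.subset_univ _)
    _ < S.ncard := Set.ncard_lt_ncard
      ((Set.ssubset_iff_of_subset Set.inter_subset_left).2 ⟨v, hvS, fun hvI => hvN hvI.2⟩)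

variable {p : ℝ} {k t : ℕ} {v : Fin n}

lemma exists_isGammaPSet_of_mod_three_ne_two (hn : n % 3 = 2) (hp : p * n = t)
    (hv : v.val % 3 ≠ 2) (hkn : 3 * k ≤ n + 1) (htk : t < 3 * k) (hkt : 3 * k < t + 3) :
    ∃ S, IsGammaPSet (pathGraph n) p S ∧ v ∈ S ∧ S.ncard = k := by
  have hT : v.val % 3 + 3 * (n / 3 + 1) ≤ n + 2 := by omega
  refine exists_isGammaPSet_of_defect_le (T := pathProg n (v.val % 3) (n / 3 + 1)) (t := t)
    ncard_closedNbhd_singleton_pathGraph_le (by rwa [Fintype.card_fin])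
    ⟨v.val / 3, by omega, by omega⟩ (by omega) ?_ ?_ hkt
  · rw [ncard_pathProg hT]
    omega
  · rw [ncard_pathProg hT, ncard_closedNbhd_pathProg hT]
    omega

lemma exists_ncard_closedNbhd_eq_of_interior (hn : n % 3 = 2) (hv0 : 0 < v.val)
    (hvn : v.val + 1 < n) :
    ∃ T : Set (Fin n), v ∈ T ∧ T.ncard = n / 3 ∧
      (closedNbhd (pathGraph n) T).ncard = 3 * (n / 3) := by
  have hT : (v.val - 1) % 3 + 1 + 3 * (n / 3) ≤ n + 2 := by omega
  refine ⟨pathProg n ((v.val - 1) % 3 + 1) (n / 3), ⟨(v.val - 1) / 3, by omega, by omega⟩,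
    ncard_pathProg hT, ?_⟩
  rw [ncard_closedNbhd_pathProg hT]
  omega

lemma exists_isGammaPSet_of_interior (hn : n % 3 = 2) (hp : p * n = t) (hv0 : 0 < v.val)
    (hvn : v.val + 1 < n) (hk : 0 < k) (hkn : 3 * k ≤ n) (htk : t ≤ 3 * k) (hkt : 3 * k < t + 3) :
    ∃ S, IsGammaPSet (pathGraph n) p S ∧ v ∈ S ∧ S.ncard = k := by
  obtain ⟨T, hvT, hTcard, hTcover⟩ := exists_ncard_closedNbhd_eq_of_interior hn hv0 hvn
  exact exists_isGammaPSet_of_defect_le (T := T) (t := t) ncard_closedNbhd_singleton_pathGraph_le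
    (by rwa [Fintype.card_fin]) hvT hk (by omega) (by omega) hkt

lemma exists_isGammaPSet_of_interior_of_add_two_eq (hn : n % 3 = 2) (hp : p * n = t)
    (hv0 : 0 < v.val) (hvn : v.val + 1 < n) (hkn : 3 * k ≤ n + 1) (htk : t + 2 = 3 * k) :
    ∃ S, IsGammaPSet (pathGraph n) p S ∧ v ∈ S ∧ S.ncard = k := by
  obtain ⟨T, hvT, hTcard, hTcover⟩ := exists_ncard_closedNbhd_eq_of_interior hn hv0 hvn
  obtain ⟨w, hwT, hlt⟩ := exists_ncard_closedNbhd_lt_insert (G := pathGraph n) (S := T) <| by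
    intro huniv
    rw [huniv, Set.ncard_univ, Nat.card_fin] at hTcover
    omega
  have hcard := Set.ncard_insert_of_notMem hwT
  exact exists_isGammaPSet_of_defect_le (T := insert w T) (t := t)
    ncard_closedNbhd_singleton_pathGraph_le (by rwa [Fintype.card_fin])
    (Set.mem_insert_of_mem w hvT) (by omega) (by omega) (by omega) (by omega)

lemma inInfluence_of_mul_eq_three_mul_add_one (hn : n % 3 = 2) (hkn : 3 * k + 1 ≤ n)
    (hp : p * n = (3 * k + 1 : ℕ)) (v : Fin n) : InInfluence (pathGraph n) p v := by
  obtain ⟨S, hS, hvS, -⟩ : ∃ S, IsGammaPSet (pathGraph n) p S ∧ v ∈ S ∧ S.ncard = k + 1 := by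
    by_cases hv : v.val % 3 = 2
    · exact exists_isGammaPSet_of_interior_of_add_two_eq hn hp (by omega) (by omega) (by omega)
        (by omega)
    · exact exists_isGammaPSet_of_mod_three_ne_two hn hp hv (by omega) (by omega) (by omega)
  exact ⟨S, hS, hvS⟩

lemma inInfluence_of_mul_eq_three_mul_add_two (hn : n % 3 = 2) (hkn : 3 * k + 2 < n)
    (hp : p * n = (3 * k + 2 : ℕ)) (v : Fin n) : InInfluence (pathGraph n) p v := by
  obtain ⟨S, hS, hvS, -⟩ : ∃ S, IsGammaPSet (pathGraph n) p S ∧ v ∈ S ∧ S.ncard = k + 1 := by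
    by_cases hv : v.val % 3 = 2
    · exact exists_isGammaPSet_of_interior hn hp (by omega) (by omega) (by omega) (by omega)
        (by omega) (by omega)
    · exact exists_isGammaPSet_of_mod_three_ne_two hn hp hv (by omega) (by omega) (by omega)
  exact ⟨S, hS, hvS⟩

lemma inInfluence_iff_of_mul_eq_three_mul (hn : n % 3 = 2) (hk : 0 < k) (hkn : 3 * k ≤ n)
    (hp : p * n = (3 * k : ℕ)) :
    InInfluence (pathGraph n) p v ↔ 0 < v.val ∧ v.val + 1 < n := by
  constructor
  · rintro ⟨S, hS, hvS⟩
    obtain ⟨T, hT, -, hTcard⟩ := exists_isGammaPSet_of_interior (v := ⟨1, by omega⟩) hn hp one_pos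
      (show 1 + 1 < n by omega) hk hkn le_rfl (by omega)
    have hScard : S.ncard = k := by rw [hS.2, ← hT.2, hTcard]
    have hScover := (isPDomSet_iff_le_ncard (by rwa [Fintype.card_fin])).1 hS.1
    have hv := le_ncard_closedNbhd_singleton ncard_closedNbhd_singleton_pathGraph_le
      (hScard ▸ hScover) hvS
    rw [ncard_closedNbhd_singleton_pathGraph] at hv
    omega
  · rintro ⟨hv0, hvn⟩
    obtain ⟨S, hS, hvS, -⟩ :=
      exists_isGammaPSet_of_interior hn hp hv0 hvn hk hkn le_rfl (by omega)
    exact ⟨S, hS, hvS⟩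

lemma inInfluence_one_iff (hn : n % 3 = 2) :
    InInfluence (pathGraph n) 1 v ↔ v.val % 3 ≠ 2 := by
  have exists_gamma : ∀ u : Fin n, u.val % 3 ≠ 2 →
      ∃ S, IsGammaPSet (pathGraph n) 1 S ∧ u ∈ S ∧ S.ncard = n / 3 + 1 := fun u hu =>
    exists_isGammaPSet_of_mod_three_ne_two hn (one_mul _) hu (by omega) (by omega) (by omega)
  constructor
  · rintro ⟨S, hS, hvS⟩ hv
    obtain ⟨T, hT, -, hTcard⟩ := exists_gamma ⟨0, by omega⟩ (by simp)
    have hScard : S.ncard = n / 3 + 1 := by rw [hS.2, ← hT.2, hTcard]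
    have hdom : closedNbhd (pathGraph n) S = Set.univ := by
      refine Set.eq_of_subset_of_ncard_le (Set.subset_univ _) ?_
      rw [Set.ncard_univ, Nat.card_eq_fintype_card]
      exact (isPDomSet_iff_le_ncard (one_mul _)).1 hS.1
    exact (lt_ncard_of_dominating_of_mem hn hdom hvS hv).ne' hScard
  · intro hv
    obtain ⟨S, hS, hvS, -⟩ := exists_gamma v hv
    exact ⟨S, hS, hvS⟩

end Path

/-- For `P_n` with `n ≡ 2 (mod 3)`.  Vertices of `pathGraph n` are `Fin n`,
with `v_i` (1-based) corresponding to the index `i - 1` (0-based); in particular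
`v_i` with `i ≡ 0 (mod 3)` corresponds to `v.val ≡ 2 (mod 3)`. -/
theorem stmt18 (n : ℕ) (hn : 2 ≤ n) (hmod : n % 3 = 2) :
    (∀ k : ℕ, 3 * k + 1 ≤ n →
      ((∀ v : Fin n, InInfluence (pathGraph n) ((3 * k + 1 : ℝ) / (n : ℝ)) v) ∧
        (3 * k + 2 < n →
          ∀ v : Fin n, InInfluence (pathGraph n) ((3 * k + 2 : ℝ) / (n : ℝ)) v))) ∧
    (∀ k : ℕ, 1 ≤ k → 3 * k ≤ n - 2 →
      ∀ v : Fin n, InInfluence (pathGraph n) ((3 * k : ℝ) / (n : ℝ)) v ↔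
        1 ≤ v.val ∧ v.val ≤ n - 2) ∧
    (∀ v : Fin n, InInfluence (pathGraph n) 1 v ↔ v.val % 3 ≠ 2) := by
  have hn0 : (n : ℝ) ≠ 0 := by
    rw [Nat.cast_ne_zero]
    omega
  refine ⟨fun k hk => ⟨?_, fun hk2 => ?_⟩, fun k hk1 hk v => ?_, fun v => inInfluence_one_iff hmod⟩
  · exact inInfluence_of_mul_eq_three_mul_add_one hmod hk
      (by push_cast; exact div_mul_cancel₀ _ hn0)
  · exact inInfluence_of_mul_eq_three_mul_add_two hmod hk2
      (by push_cast; exact div_mul_cancel₀ _ hn0)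
  · rw [inInfluence_iff_of_mul_eq_three_mul (k := k) hmod hk1 (by omega)
      (by push_cast; exact div_mul_cancel₀ _ hn0)]
    omega
end
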